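/- Let X be an emetric space, let ψ : X → X be a bijection which is Lipschitz with constant K, with K ≥ 1, and let L ⊆ X be a subset. Then the Hausdorff extended distance between L and ψ(L) satisfies hausdorffEdist(L, ψ(L)) ≤ K · max( sup_{x ∈ L} infEdist(x, ψ(L)), sup_{x ∈ L} infEdist(x, ψ⁻¹(L)) ), where ψ⁻¹(L) denotes the preimage of L under ψ. -/

import Mathlib

open EMetric

section Lipschitz

variable {X Y : Type*} [PseudoEMetricSpace X] [PseudoEMetricSpace Y] {f : X → Y} {K : NNReal}

theorem infEDist_apply_le_mul_infEDist_preimage (hf : LipschitzWith K f) (hK : K ≠ 0)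
    (x : X) (t : Set Y) :
    Metric.infEDist (f x) t ≤ K * Metric.infEDist x (f ⁻¹' t) :=
  calc
    Metric.infEDist (f x) t ≤ ⨅ y ∈ f ⁻¹' t, K * edist x y :=
      le_iInf₂ fun y hy => (Metric.infEDist_le_edist_of_mem (Set.mem_preimage.1 hy)).trans (hf x y)
    _ = K * Metric.infEDist x (f ⁻¹' t) := by
      simp only [Metric.infEDist,
        ENNReal.mul_iInf_of_ne (ENNReal.coe_ne_zero.2 hK) ENNReal.coe_ne_top]

theorem iSup_infEDist_image_le_mul_iSup_infEDist_preimage (hf : LipschitzWith K f) (hK : K ≠ 0)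
    (s : Set X) (t : Set Y) :
    ⨆ y ∈ f '' s, Metric.infEDist y t ≤ K * ⨆ x ∈ s, Metric.infEDist x (f ⁻¹' t) := by
  simp only [iSup_image, ENNReal.mul_iSup]
  exact iSup₂_mono fun x _ => infEDist_apply_le_mul_infEDist_preimage hf hK x t

end Lipschitz

theorem hausdorffEdist_image_le_general {X : Type*} [PseudoEMetricSpace X] {ψ : X → X} {K : NNReal}
    (hψ : LipschitzWith K ψ) (hK : K ≠ 0) (L : Set X) :
    Metric.hausdorffEDist L (ψ '' L) ≤
      max (⨆ x ∈ L, Metric.infEDist x (ψ '' L)) (K * ⨆ x ∈ L, Metric.infEDist x (ψ ⁻¹' L)) := by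
  rw [Metric.hausdorffEDist_def]
  exact max_le_max_left _ (iSup_infEDist_image_le_mul_iSup_infEDist_preimage hψ hK L L)

/-- For a Lipschitz bijection `ψ` with constant `K ≥ 1`, the Hausdorff extended distance
between `L` and `ψ(L)` is at most `K` times the maximum of the one-sided Hausdorff distances
of `L` from `ψ(L)` and of `L` from `ψ⁻¹(L)`. -/
theorem hausdorffEdist_image_le
    {X : Type*} [EMetricSpace X] {ψ : X → X} {K : NNReal}
    (hbij : Function.Bijective ψ) (hψ : LipschitzWith K ψ) (hK : 1 ≤ K) (L : Set X) :
    hausdorffEdist L (ψ '' L) ≤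
      K * max (⨆ x ∈ L, infEdist x (ψ '' L)) (⨆ x ∈ L, infEdist x (ψ ⁻¹' L)) := by
  rw [mul_max]
  exact (hausdorffEdist_image_le_general hψ (zero_lt_one.trans_le hK).ne' L).trans
    (max_le_max_right _ (le_mul_of_one_le_left' (ENNReal.one_le_coe_iff.2 hK)))
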